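/- There exists a positive absolute constant c such that for every positive integer n, every β > 0, and every j ∈ [n] with j ≤ β^{-1}, one has P(N_j ≤ e^{-2} j / 2) ≤ exp(-c j). -/

import Mathlib

/-!
Since `b_k ≥ E_k`, the count `N_j - 1` dominates `#{k < j : E_k ≥ j}` whatever `σ₀` is. With `J` the
`1`-indexed value of `j`, there are `J - 1` such `k`, and each event `E_k ≥ J - 1` has probability
`exp(-2β(J - 1)) ≥ e⁻²` because `βJ ≤ 1`. The count is therefore at least binomial with parameters
`J - 1` and `e⁻²`, and the Chernoff bound with the moment `E[2^{-S}]` (`chernoff_half`) gives the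
claim with `c = e⁻² (1 - log 2) / 2`. The permutation only enters through the total mass of the
Mallows measure.
-/


open scoped BigOperators Classical ENNReal
open MeasureTheory

/-- The (unnormalized) Mallows weight `exp(-β ∑ᵢ |σ(i) - i|)` for the `L¹` distance.
Permutations of `[n] = {1, …, n}` are modeled as permutations of `Fin n`. -/
noncomputable def mallowsWeight (n : ℕ) (β : ℝ) (σ : Equiv.Perm (Fin n)) : ℝ :=
  Real.exp (-β * ∑ i : Fin n, |((σ i : ℕ) : ℝ) - ((i : ℕ) : ℝ)|)

/-- The probability of `σ` under the Mallows permutation model `P_{n,β}`. -/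
noncomputable def mallowsProb (n : ℕ) (β : ℝ) (σ : Equiv.Perm (Fin n)) : ℝ :=
  mallowsWeight n β σ / ∑ τ : Equiv.Perm (Fin n), mallowsWeight n β τ

instance (n : ℕ) : MeasurableSpace (Equiv.Perm (Fin n)) := ⊤

/-- The Mallows model `P_{n,β}` as a measure on `S_n`. -/
noncomputable def mallowsMeasure (n : ℕ) (β : ℝ) : Measure (Equiv.Perm (Fin n)) :=
  ∑ σ : Equiv.Perm (Fin n),
    ENNReal.ofReal (mallowsProb n β σ) • MeasureTheory.Measure.dirac σ

/-- The probability space carrying `σ₀ ~ P_{n,β}` together with `n` i.i.d. exponential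
random variables `E₁, …, E_n` of rate `2β`, independent of `σ₀`.  A sample point is
`ω = (σ₀, (E_k)_{k ∈ [n]})`. -/
noncomputable def hitRunMeasure (n : ℕ) (β : ℝ) :
    Measure (Equiv.Perm (Fin n) × (Fin n → ℝ)) :=
  (mallowsMeasure n β).prod
    (Measure.pi fun _ : Fin n => ProbabilityTheory.expMeasure (2 * β))

/-- `b_k = max{k, σ₀(k)} + E_k` (so that, conditionally on `σ₀`,
`P(b_k ≥ x | σ₀) = exp(-2β (x - max{k, σ₀(k)})₊)`).  In `Fin n` coordinates all the
`b_k` and the thresholds `j` are shifted by one simultaneously. -/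
noncomputable def bVal (n : ℕ) (ω : Equiv.Perm (Fin n) × (Fin n → ℝ)) (k : Fin n) : ℝ :=
  max ((k : ℕ) : ℝ) ((ω.1 k : ℕ) : ℝ) + ω.2 k

/-- `H_j = {k ∈ [n] : k ≤ j - 1, b_k ≥ j}`. -/
noncomputable def Hset (n : ℕ) (ω : Equiv.Perm (Fin n) × (Fin n → ℝ)) (j : Fin n) :
    Finset (Fin n) :=
  Finset.univ.filter fun k => k < j ∧ ((j : ℕ) : ℝ) ≤ bVal n ω k

/-- `N_j = 1 + #{k ∈ [n] : k ≤ j - 1, b_k ≥ j}`. -/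
noncomputable def Nval (n : ℕ) (ω : Equiv.Perm (Fin n) × (Fin n → ℝ)) (j : Fin n) : ℕ :=
  1 + (Hset n ω j).card

lemma mallowsMeasure_univ (n : ℕ) (β : ℝ) : mallowsMeasure n β Set.univ = 1 := by
  have hw : ∀ σ, 0 < mallowsWeight n β σ := fun σ => Real.exp_pos _
  have hZ : 0 < ∑ τ : Equiv.Perm (Fin n), mallowsWeight n β τ :=
    Finset.sum_pos (fun σ _ => hw σ) Finset.univ_nonempty
  simp only [mallowsMeasure, Measure.finsetSum_apply, Measure.smul_apply, measure_univ,
    smul_eq_mul, mul_one]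
  rw [← ENNReal.ofReal_sum_of_nonneg (f := mallowsProb n β)
    (fun σ _ => div_nonneg (hw σ).le hZ.le)]
  simp only [mallowsProb]
  rw [← Finset.sum_div, div_self hZ.ne', ENNReal.ofReal_one]

lemma expMeasure_Ici_ge {r : ℝ} (hr : 0 < r) {x : ℝ} (hx : 0 ≤ x) :
    Real.exp (-(r * x)) ≤ (ProbabilityTheory.expMeasure r).real (Set.Ici x) := by
  have := ProbabilityTheory.isProbabilityMeasure_expMeasure hr
  have h1 := ProbabilityTheory.cdf_expMeasure_eq hr x
  rw [ProbabilityTheory.cdf_eq_real, if_pos hx] at h1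
  have h2 : (ProbabilityTheory.expMeasure r).real (Set.Iic x)ᶜ
      = 1 - (ProbabilityTheory.expMeasure r).real (Set.Iic x) :=
    probReal_compl_eq_one_sub measurableSet_Iic
  have h3 : (ProbabilityTheory.expMeasure r).real (Set.Iic x)ᶜ
      ≤ (ProbabilityTheory.expMeasure r).real (Set.Ici x) := by
    rw [Set.compl_Iic]
    exact measureReal_mono Set.Ioi_subset_Ici_self
  linarith

/-- Lower-tail Chernoff bound for the number of hits of `B` among the coordinates in `s` of an
i.i.d. sample, obtained from Markov's inequality for `2^{-#hits}`. -/
lemma chernoff_half {n : ℕ} (μ : Measure ℝ) [IsProbabilityMeasure μ] {B : Set ℝ}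
    (hB : MeasurableSet B) (s : Finset (Fin n)) {q : ℝ} (hq : q ≤ μ.real B) (a : ℝ) :
    (Measure.pi fun _ : Fin n => μ).real
        {x | ((s.filter fun k => x k ∈ B).card : ℝ) ≤ a}
      ≤ Real.exp (a * Real.log 2 - q / 2 * s.card) := by
  let g : Fin n → ℝ → ℝ := fun k y => if k ∈ s then 1 - (1 / 2) * B.indicator 1 y else 1
  have hind : Integrable (B.indicator (1 : ℝ → ℝ)) μ :=
    (integrable_const (1 : ℝ)).indicator hB
  have hgint : ∀ k, Integrable (g k) μ := by
    intro k
    by_cases hk : k ∈ s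
    · simp only [g, hk, if_true]
      exact (integrable_const _).sub (hind.const_mul _)
    · simp only [g, hk, if_false]
      exact integrable_const _
  have hgval : ∀ k, ∫ y, g k y ∂μ = if k ∈ s then 1 - (1 / 2) * μ.real B else 1 := by
    intro k
    by_cases hk : k ∈ s
    · simp only [g, hk, if_true]
      rw [integral_sub (integrable_const _) (hind.const_mul _), integral_const_mul,
        integral_indicator_one hB]
      simp
    · simp [g, hk]
  have hprod : ∀ x : Fin n → ℝ,
      ∏ k, g k (x k) = Real.exp (-(((s.filter fun k => x k ∈ B).card : ℝ) * Real.log 2)) := by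
    intro x
    have h1 : ∏ k, g k (x k) = ∏ k ∈ s, if x k ∈ B then (1 / 2 : ℝ) else 1 := by
      simp only [g]
      rw [Finset.prod_ite_mem, Finset.univ_inter]
      refine Finset.prod_congr rfl fun k _ => ?_
      by_cases h : x k ∈ B <;> (simp [h]; try norm_num)
    rw [h1, ← Finset.prod_filter, Finset.prod_const, ← mul_neg, ← Real.log_inv,
      Real.exp_nat_mul, Real.exp_log (by norm_num), one_div]
  have hmarkov := mul_meas_ge_le_integral_of_nonneg
    (μ := Measure.pi fun _ : Fin n => μ) (f := fun x => ∏ k, g k (x k))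
    (ae_of_all _ fun x => by
      simp only [hprod]
      exact (Real.exp_pos _).le)
    (Integrable.fintype_prod hgint) (Real.exp (-(a * Real.log 2)))
  have hset : {x : Fin n → ℝ | Real.exp (-(a * Real.log 2)) ≤ ∏ k, g k (x k)}
      = {x | ((s.filter fun k => x k ∈ B).card : ℝ) ≤ a} := by
    ext x
    have := Real.log_pos (by norm_num : (1 : ℝ) < 2)
    simp only [Set.mem_ofPred_eq, hprod, Real.exp_le_exp, neg_le_neg_iff]
    exact mul_le_mul_iff_left₀ this
  rw [hset, integral_fintype_prod_eq_prod] at hmarkov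
  simp only [hgval] at hmarkov
  rw [Finset.prod_ite_mem, Finset.univ_inter, Finset.prod_const] at hmarkov
  have hB1 : μ.real B ≤ 1 := measureReal_le_one
  have hpow : (1 - 1 / 2 * μ.real B) ^ s.card ≤ Real.exp (-(q / 2 * s.card)) := by
    calc (1 - 1 / 2 * μ.real B) ^ s.card ≤ (Real.exp (-(q / 2))) ^ s.card := by
          apply pow_le_pow_left₀ (by linarith)
          have := Real.add_one_le_exp (-(q / 2))
          linarith
      _ = _ := by rw [← Real.exp_nat_mul]; congr 1; ring
  have h := hmarkov.trans hpow
  rw [sub_eq_add_neg, Real.exp_add]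
  rw [Real.exp_neg, inv_mul_le_iff₀ (Real.exp_pos _)] at h
  exact h

/-- There is an absolute constant `c > 0` such that for all `n ≥ 1`, `β > 0`, and
`j ∈ [n]` with `j ≤ β⁻¹` (the `1`-indexed value of `j : Fin n` is `j + 1`):
`P(N_j ≤ e⁻² j / 2) ≤ exp(-c j)`. -/
theorem statement9 :
    ∃ c : ℝ, 0 < c ∧
      ∀ n : ℕ, 0 < n → ∀ β : ℝ, 0 < β → ∀ j : Fin n, ((j : ℕ) : ℝ) + 1 ≤ β⁻¹ →
        hitRunMeasure n β
            {ω | (Nval n ω j : ℝ) ≤ Real.exp (-2) * (((j : ℕ) : ℝ) + 1) / 2}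
          ≤ ENNReal.ofReal (Real.exp (-c * (((j : ℕ) : ℝ) + 1))) := by
  have hlog1 := Real.log_two_lt_d9
  have hlog0 := Real.log_two_gt_d9
  refine ⟨Real.exp (-2) / 2 * (1 - Real.log 2),
    mul_pos (by positivity) (by linarith), ?_⟩
  intro n _ β hβ j hj
  have h2β : 0 < 2 * β := by linarith
  have := ProbabilityTheory.isProbabilityMeasure_expMeasure h2β
  set μ := ProbabilityTheory.expMeasure (2 * β) with hμ
  set J : ℝ := ((j : ℕ) : ℝ) with hJ
  have hJ0 : 0 ≤ J := Nat.cast_nonneg _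
  have hq : Real.exp (-2) ≤ μ.real (Set.Ici J) := by
    refine le_trans ?_ (expMeasure_Ici_ge h2β hJ0)
    apply Real.exp_le_exp.mpr
    have : β * (J + 1) ≤ 1 := by
      calc β * (J + 1) ≤ β * β⁻¹ := mul_le_mul_of_nonneg_left hj hβ.le
        _ = 1 := mul_inv_cancel₀ hβ.ne'
    nlinarith
  set a : ℝ := Real.exp (-2) * (J + 1) / 2 - 1 with ha
  set A : Set (Fin n → ℝ) :=
    {x | (((Finset.Iio j).filter fun k => x k ∈ Set.Ici J).card : ℝ) ≤ a} with hA
  have hsub : {ω | (Nval n ω j : ℝ) ≤ Real.exp (-2) * (J + 1) / 2}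
      ⊆ (Set.univ : Set (Equiv.Perm (Fin n))) ×ˢ A := by
    intro ω hω
    refine ⟨trivial, ?_⟩
    have hle : ((Finset.Iio j).filter fun k => ω.2 k ∈ Set.Ici J).card
        ≤ (Hset n ω j).card := by
      apply Finset.card_le_card
      intro k hk
      simp only [Finset.mem_filter, Finset.mem_Iio, Set.mem_Ici] at hk
      refine Finset.mem_filter.mpr ⟨Finset.mem_univ k, hk.1, ?_⟩
      rw [bVal]
      have : (0 : ℝ) ≤ max ((k : ℕ) : ℝ) ((ω.1 k : ℕ) : ℝ) :=
        le_max_of_le_left (Nat.cast_nonneg _)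
      linarith [hk.2]
    have hle' : (((Finset.Iio j).filter fun k => ω.2 k ∈ Set.Ici J).card : ℝ)
        ≤ ((Hset n ω j).card : ℝ) := by exact_mod_cast hle
    simp only [Set.mem_ofPred_eq, Nval, Nat.cast_add, Nat.cast_one] at hω
    simp only [hA, Set.mem_ofPred_eq]
    linarith
  have hch := chernoff_half μ measurableSet_Ici (Finset.Iio j) hq a
  rw [Fin.card_Iio, ← hJ] at hch
  calc hitRunMeasure n β _
      ≤ hitRunMeasure n β ((Set.univ : Set (Equiv.Perm (Fin n))) ×ˢ A) := measure_mono hsub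
    _ = (Measure.pi fun _ : Fin n => μ) A := by
        rw [hitRunMeasure, Measure.prod_prod, mallowsMeasure_univ, one_mul]
    _ = ENNReal.ofReal ((Measure.pi fun _ : Fin n => μ).real A) :=
        (ofReal_measureReal).symm
    _ ≤ _ := by
        apply ENNReal.ofReal_le_ofReal
        refine hch.trans (Real.exp_le_exp.mpr ?_)
        -- The leftover constant is `e⁻² / 2 - log 2 ≤ 0`.
        have he : Real.exp (-2) ≤ 1 := Real.exp_le_one_iff.mpr (by norm_num)
        rw [ha]
        nlinarith
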